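/- Let G be an r-partite graph with parts V_1,…,V_r of size at least n > Δ(2 − (2d+3)/r) and maximum degree at most Δ. Let I ⊆ V(G), d+1 ≤ t ≤ r, and let U be a set of r − t parts such that |I| ≤ 2(t−d−1) and I dominates every part not in U. Then for any vertex x ∈ V(G), there exists an independent transversal T' of the parts in U (one vertex per part of U, pairwise non-adjacent) with T' ∩ N_G(I ∪ {x}) = ∅. -/

import Mathlib

/-!
An independent transversal of the parts in `U` avoiding `N_G(I ∪ {x})` is an independent transversal
of the parts in `U` from which `N_G(I ∪ {x})` has been removed. If there is none, the
Haxell–Szabó lemma gives a set `S ⊆ U` of parts and fewer than `|S|` edges whose endpoints dominate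
what remains of the parts in `S`. Together with `I ∪ {x}`, these endpoints dominate `t + |S|` whole
parts, that is at least `(t + |S|) n` vertices; but there are at most `2 (t + |S|) - (2 d + 3)`
dominating vertices and each dominates at most `Δ`, which is too few.

The Haxell–Szabó lemma is proved by deleting edges. If all parts except `p` have an independent
transversal `f` but adding `p` makes this impossible, each vertex `v` of `p` has a neighbour
`w = f j`. Either there is still no independent transversal after deleting the edge `vw`, or there
is one and it uses both `v` and `w`; in the latter case remove `N_G({v, w})` and merge the parts `p`
and `j`. A transversal of this smaller system would extend by `v` or by `w`, whichever lies in the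
part that the merged one misses, so the system is obstructed as well, and `vw` is added to its
dominating edges.
-/

open Finset Function

section

variable {V ι : Type*} {G H : SimpleGraph V} {B C : ι → Set V} {P Q S : Finset ι} {f : ι → V}
  {v w : V} {p j : ι}

/-- `f` picks a vertex `f i` from each part `B i` with `i ∈ P`, and no two of them are adjacent:
an independent transversal of the parts indexed by `P`. The values of `f` outside `P` are
irrelevant. -/
structure IsIndependentTransversal (G : SimpleGraph V) (B : ι → Set V) (P : Finset ι)
    (f : ι → V) : Prop where
  mem : ∀ i ∈ P, f i ∈ B i
  not_adj : ∀ i ∈ P, ∀ k ∈ P, ¬ G.Adj (f i) (f k)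

/-- The neighbourhood `N_G(X)` of a set of vertices. It may meet `X`, and `X` dominates `Y` when
`Y ⊆ neighborsOf G X`. -/
def neighborsOf (G : SimpleGraph V) (X : Set V) : Set V := {u | ∃ z ∈ X, G.Adj u z}

/-- The family of parts obtained from `B` by removing the neighbours of `X`; its independent
transversals are those of `B` that avoid `N_G(X)`. -/
def awayFrom (G : SimpleGraph V) (B : ι → Set V) (X : Set V) (i : ι) : Set V :=
  B i \ neighborsOf G X

/-- The family of parts in which the part `p` has absorbed the part `j`. The part `j` itself is left
in place, so this is used on index sets without `j`. -/
def mergeParts [DecidableEq ι] (B : ι → Set V) (p j : ι) : ι → Set V := update B p (B p ∪ B j)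

/-- The set `V(Z)` of endpoints of a set of edges. -/
def endpoints [DecidableEq V] (Z : Finset (Sym2 V)) : Finset V := Z.biUnion Sym2.toFinset

/-- `Z` consists of fewer than `|S|` edges whose endpoints dominate the parts indexed by `S`: the
structure which the Haxell–Szabó lemma finds in the absence of an independent transversal. -/
structure IsObstruction [DecidableEq V] (G : SimpleGraph V) (B : ι → Set V) (S : Finset ι)
    (Z : Finset (Sym2 V)) : Prop where
  subset_edgeSet : (Z : Set (Sym2 V)) ⊆ G.edgeSet
  card_lt : #Z < #S
  subset_neighborsOf : ⋃ i ∈ S, B i ⊆ neighborsOf G (endpoints Z)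

theorem deleteEdges_singleton_lt (hvw : G.Adj v w) : G.deleteEdges {s(v, w)} < G := by
  refine (G.deleteEdges_le _).lt_of_ne fun h => ?_
  rw [← h, SimpleGraph.deleteEdges_adj] at hvw
  exact hvw.2 rfl

theorem neighborsOf_mono (h : H ≤ G) (X : Set V) : neighborsOf H X ⊆ neighborsOf G X :=
  fun _ ⟨z, hz, hadj⟩ => ⟨z, hz, h hadj⟩

theorem neighborsOf_union (X Y : Set V) :
    neighborsOf G (X ∪ Y) = neighborsOf G X ∪ neighborsOf G Y := by
  ext u
  simp only [neighborsOf, Set.mem_union, or_and_right, exists_or, Set.mem_ofPred_eq]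

theorem neighborsOf_eq_biUnion_neighborSet (X : Set V) :
    neighborsOf G X = ⋃ z ∈ X, G.neighborSet z := by
  ext u
  simp [neighborsOf, G.adj_comm u]

theorem biUnion_subset_neighborsOf_union_awayFrom (B : ι → Set V) (X : Set V) :
    ⋃ i ∈ S, B i ⊆ neighborsOf G X ∪ ⋃ i ∈ S, awayFrom G B X i := by
  simp only [awayFrom, ← Set.iUnion_sdiff, ← Set.sdiff_subset_iff, subset_rfl]

theorem pairwiseDisjoint_awayFrom (hB : (P : Set ι).PairwiseDisjoint B) (X : Set V) :
    (P : Set ι).PairwiseDisjoint (awayFrom G B X) :=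
  hB.mono fun _ => Set.sdiff_subset

theorem ncard_neighborsOf_le {Δ : ℕ} (X : Finset V)
    (hdeg : ∀ z ∈ X, (G.neighborSet z).ncard ≤ Δ) : (neighborsOf G X).ncard ≤ #X * Δ := by
  calc (neighborsOf G X).ncard = (⋃ z ∈ X, G.neighborSet z).ncard := by
        simp only [neighborsOf_eq_biUnion_neighborSet, mem_coe]
    _ ≤ ∑ z ∈ X, (G.neighborSet z).ncard := X.set_ncard_biUnion_le _
    _ ≤ #X * Δ := sum_le_card_nsmul _ _ _ hdeg

theorem card_mul_le_ncard_biUnion [Finite V] {n : ℕ} (hB : (P : Set ι).PairwiseDisjoint B)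
    (hn : ∀ i ∈ P, n ≤ (B i).ncard) : #P * n ≤ (⋃ i ∈ P, B i).ncard := by
  calc #P * n ≤ ∑ i ∈ P, (B i).ncard := card_nsmul_le_sum _ _ _ hn
    _ = (⋃ i ∈ P, B i).ncard := by
        rw [← finsum_mem_coe_finset]
        exact (P.finite_toSet.ncard_biUnion (fun i _ => (B i).toFinite) hB).symm

namespace IsIndependentTransversal

theorem comp (hf : IsIndependentTransversal G B P f) {σ : ι → ι} (hσ : ∀ i ∈ Q, σ i ∈ P)
    (hC : ∀ i ∈ Q, f (σ i) ∈ C i) : IsIndependentTransversal G C Q (f ∘ σ) :=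
  ⟨hC, fun i hi k hk => hf.not_adj _ (hσ i hi) _ (hσ k hk)⟩

theorem anti (hf : IsIndependentTransversal G B P f) (hH : H ≤ G) :
    IsIndependentTransversal H B P f :=
  ⟨hf.mem, fun i hi k hk hadj => hf.not_adj i hi k hk (hH hadj)⟩

theorem eq_of_mem (hf : IsIndependentTransversal G B P f) (hB : (P : Set ι).PairwiseDisjoint B)
    {i k : ι} (hi : i ∈ P) (hk : k ∈ P) (h : f i ∈ B k) : i = k :=
  hB.elim_set hi hk (f i) (hf.mem i hi) h

theorem of_deleteEdges (hf : IsIndependentTransversal (G.deleteEdges {s(v, w)}) B P f)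
    (h : ∀ i ∈ P, ∀ k ∈ P, f i = v → f k ≠ w) : IsIndependentTransversal G B P f := by
  refine ⟨hf.mem, fun i hi k hk hadj => hf.not_adj i hi k hk ?_⟩
  rw [SimpleGraph.deleteEdges_adj, Set.mem_singleton_iff, Sym2.eq_iff]
  exact ⟨hadj, by rintro (⟨hv, hw⟩ | ⟨hw, hv⟩); exacts [h i hi k hk hv hw, h k hk i hi hv hw]⟩

theorem apply_eq_of_deleteEdges (hf : IsIndependentTransversal (G.deleteEdges {s(v, w)}) B P f)
    (hno : ¬ ∃ g, IsIndependentTransversal G B P g) (hB : (P : Set ι).PairwiseDisjoint B)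
    (hp : p ∈ P) (hj : j ∈ P) (hv : v ∈ B p) (hw : w ∈ B j) : f p = v ∧ f j = w := by
  by_contra hne
  refine hno ⟨f, hf.of_deleteEdges fun i hi k hk hiv hkw => hne ?_⟩
  rw [← hf.eq_of_mem hB hi hp (hiv ▸ hv), ← hf.eq_of_mem hB hk hj (hkw ▸ hw)]
  exact ⟨hiv, hkw⟩

theorem exists_finset {part : V → ι} (hB : ∀ i, ∀ u ∈ B i, part u = i)
    (hf : IsIndependentTransversal G B P f) :
    ∃ T : Finset V, (∀ y ∈ T, part y ∈ P ∧ y ∈ B (part y)) ∧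
      (∀ i ∈ P, ∃! y, y ∈ T ∧ part y = i) ∧ ∀ y ∈ T, ∀ z ∈ T, ¬ G.Adj y z := by
  classical
  have hpart : ∀ i ∈ P, part (f i) = i := fun i hi => hB i _ (hf.mem i hi)
  refine ⟨P.image f, forall_mem_image.2 fun i hi => ?_, fun i hi => ?_, ?_⟩
  · rw [hpart i hi]
    exact ⟨hi, hf.mem i hi⟩
  · refine ⟨f i, ⟨mem_image_of_mem f hi, hpart i hi⟩, fun y ⟨hy, hyi⟩ => ?_⟩
    obtain ⟨k, hk, rfl⟩ := mem_image.1 hy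
    rw [← hyi, hpart k hk]
  · exact forall_mem_image.2 fun i hi => forall_mem_image.2 fun k hk => hf.not_adj i hi k hk

variable [DecidableEq ι]

theorem update_of_erase (hf : IsIndependentTransversal G B (P.erase p) f) (hv : v ∈ B p)
    (hadj : ∀ i ∈ P.erase p, ¬ G.Adj v (f i)) :
    IsIndependentTransversal G B P (update f p v) := by
  refine ⟨fun i hi => ?_, fun i hi k hk => ?_⟩
  · obtain rfl | hip := eq_or_ne i p
    · simpa using hv
    · simpa [hip] using hf.mem i (mem_erase.2 ⟨hip, hi⟩)
  · by_cases hip : i = p <;> by_cases hkp : k = p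
    · simp [hip, hkp]
    · simpa [hip, hkp] using hadj k (mem_erase.2 ⟨hkp, hk⟩)
    · simpa [hip, hkp, G.adj_comm] using hadj i (mem_erase.2 ⟨hip, hi⟩)
    · simpa [hip, hkp] using hf.not_adj i (mem_erase.2 ⟨hip, hi⟩) k (mem_erase.2 ⟨hkp, hk⟩)

theorem exists_adj (hf : IsIndependentTransversal G B (P.erase p) f)
    (hno : ¬ ∃ g, IsIndependentTransversal G B P g) (hv : v ∈ B p) :
    ∃ i ∈ P.erase p, G.Adj v (f i) := by
  by_contra! hadj
  exact hno ⟨_, hf.update_of_erase hv hadj⟩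

theorem exists_of_mergeParts
    (hf : IsIndependentTransversal G (awayFrom G (mergeParts B p j) {v, w}) (P.erase j) f)
    (hp : p ∈ P) (hpj : p ≠ j) (hv : v ∈ B p) (hw : w ∈ B j) :
    ∃ g, IsIndependentTransversal G B P g := by
  have hnadj : ∀ i ∈ P.erase j, ¬ G.Adj v (f i) ∧ ¬ G.Adj w (f i) := by
    simpa [neighborsOf, G.adj_comm] using fun i hi => (hf.mem i hi).2
  have hmem : ∀ i ∈ P.erase j, i ≠ p → f i ∈ B i := fun i hi hip => by
    simpa [mergeParts, hip] using (hf.mem i hi).1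
  have hp' : p ∈ P.erase j := mem_erase.2 ⟨hpj, hp⟩
  have hfp : f p ∈ B p ∨ f p ∈ B j := by simpa [mergeParts] using (hf.mem p hp').1
  obtain hfp | hfp := hfp
  · have hf' : IsIndependentTransversal G B (P.erase j) f := by
      refine hf.comp (σ := id) (fun _ => id) fun i hi => ?_
      obtain rfl | hip := eq_or_ne i p
      exacts [hfp, hmem i hi hip]
    exact ⟨_, hf'.update_of_erase hw fun i hi => (hnadj i hi).2⟩
  · have hσ : ∀ i ∈ P.erase p, Equiv.swap p j i ∈ P.erase j := by grind
    have hf' : IsIndependentTransversal G B (P.erase p) (f ∘ Equiv.swap p j) := by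
      refine hf.comp hσ fun i hi => ?_
      obtain rfl | hij := eq_or_ne i j
      · simpa using hfp
      · have hip := ne_of_mem_erase hi
        rw [Equiv.swap_apply_of_ne_of_ne hip hij]
        exact hmem i (mem_erase.2 ⟨hij, mem_of_mem_erase hi⟩) hip
    exact ⟨_, hf'.update_of_erase hv fun i hi => (hnadj _ (hσ i hi)).1⟩

theorem mergeParts_erase
    (hf : IsIndependentTransversal (G.deleteEdges {s(v, w)}) B P f)
    (hB : (P : Set ι).PairwiseDisjoint B) (hp : p ∈ P) (hj : j ∈ P) (hv : f p = v) (hw : f j = w) :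
    IsIndependentTransversal (G.deleteEdges {s(v, w)}) (awayFrom G (mergeParts B p j) {v, w})
      ((P.erase j).erase p) f := by
  refine hf.comp (σ := id) (by grind) fun i hi => ?_
  obtain ⟨hip, hij, hiP⟩ : i ≠ p ∧ i ≠ j ∧ i ∈ P := by simpa using hi
  have hiv : f i ≠ v := fun h => hip (hf.eq_of_mem hB hiP hp (h ▸ hv ▸ hf.mem p hp))
  have hiw : f i ≠ w := fun h => hij (hf.eq_of_mem hB hiP hj (h ▸ hw ▸ hf.mem j hj))
  have hnv := hf.not_adj i hiP p hp
  have hnw := hf.not_adj i hiP j hj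
  rw [hv, SimpleGraph.deleteEdges_adj] at hnv
  rw [hw, SimpleGraph.deleteEdges_adj] at hnw
  refine ⟨by simpa [mergeParts, hip] using hf.mem i hiP, ?_⟩
  rintro ⟨z, rfl | rfl, hadj⟩
  · exact hnv ⟨hadj, by simp [hiv, hiw]⟩
  · exact hnw ⟨hadj, by simp [hiv, hiw]⟩

end IsIndependentTransversal

section Merge

variable [DecidableEq ι]

theorem pairwiseDisjoint_mergeParts (hB : (P : Set ι).PairwiseDisjoint B) (hp : p ∈ P)
    (hj : j ∈ P) : ((P.erase j : Finset ι) : Set ι).PairwiseDisjoint (mergeParts B p j) := by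
  have hdisj : ∀ i ∈ P, i ≠ p → i ≠ j → Disjoint (B p ∪ B j) (B i) := fun i hi hip hij =>
    Set.disjoint_union_left.2 ⟨hB hp hi hip.symm, hB hj hi hij.symm⟩
  intro i hi k hk hik
  simp only [coe_erase, Set.mem_sdiff, mem_coe, Set.mem_singleton_iff] at hi hk
  simp only [onFun, mergeParts, update_apply]
  split_ifs with hip hkp hkp
  · exact absurd (hip.trans hkp.symm) hik
  · exact hdisj k hk.1 hkp hk.2
  · exact (hdisj i hi.1 hip hi.2).symm
  · exact hB hi.1 hk.1 hik

theorem biUnion_insert_subset_biUnion_mergeParts (B : ι → Set V) (hp : p ∈ S) :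
    ⋃ i ∈ insert j S, B i ⊆ ⋃ i ∈ S, mergeParts B p j i := by
  have hpart : ∀ i, B i ⊆ mergeParts B p j i := fun i => by
    obtain rfl | hip := eq_or_ne i p <;> simp [mergeParts, *]
  rw [set_biUnion_insert]
  refine Set.union_subset ?_ (Set.iUnion₂_mono fun i _ => hpart i)
  exact Set.Subset.trans (by simp [mergeParts]) (Set.subset_biUnion_of_mem hp)

end Merge

variable [DecidableEq V]

theorem card_endpoints_le (Z : Finset (Sym2 V)) : #(endpoints Z) ≤ 2 * #Z := by
  rw [mul_comm]
  refine card_biUnion_le_card_mul _ _ _ fun z _ => ?_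
  rw [Sym2.card_toFinset]
  split_ifs <;> simp

theorem endpoints_insert (v w : V) (Z : Finset (Sym2 V)) :
    endpoints (insert s(v, w) Z) = {v, w} ∪ endpoints Z := by
  rw [endpoints, biUnion_insert, Sym2.toFinset_mk_eq, endpoints]

namespace IsObstruction

variable {Z : Finset (Sym2 V)}

theorem mono (h : IsObstruction H B S Z) (hH : H ≤ G) : IsObstruction G B S Z :=
  ⟨h.subset_edgeSet.trans (SimpleGraph.edgeSet_mono hH), h.card_lt,
    h.subset_neighborsOf.trans (neighborsOf_mono hH _)⟩

theorem insert_of_mergeParts [DecidableEq ι]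
    (h : IsObstruction G (awayFrom G (mergeParts B p j) {v, w}) S Z) (hp : p ∈ S) (hj : j ∉ S)
    (hvw : G.Adj v w) : IsObstruction G B (insert j S) (insert s(v, w) Z) where
  subset_edgeSet := by
    rw [coe_insert]
    exact Set.insert_subset hvw h.subset_edgeSet
  card_lt := by
    rw [card_insert_of_notMem hj]
    exact (card_insert_le _ _).trans_lt (Nat.succ_lt_succ h.card_lt)
  subset_neighborsOf := calc
    ⋃ i ∈ insert j S, B i ⊆ ⋃ i ∈ S, mergeParts B p j i :=
      biUnion_insert_subset_biUnion_mergeParts B hp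
    _ ⊆ neighborsOf G {v, w} ∪ ⋃ i ∈ S, awayFrom G (mergeParts B p j) {v, w} i :=
      biUnion_subset_neighborsOf_union_awayFrom _ _
    _ ⊆ neighborsOf G (endpoints (insert s(v, w) Z)) := by
      rw [endpoints_insert, coe_union, coe_pair, neighborsOf_union]
      exact Set.union_subset_union_right _ h.subset_neighborsOf

end IsObstruction

variable [Finite V]

-- The induction relies on `p ∈ S`: an obstruction of the merged family then involves both merged
-- parts, so adding one edge to it is paid for by adding the part `j`.
theorem exists_isObstruction_of_erase [DecidableEq ι] (hB : (P : Set ι).PairwiseDisjoint B)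
    (hp : p ∈ P) (hno : ¬ ∃ f, IsIndependentTransversal G B P f)
    (herase : ∃ f, IsIndependentTransversal G B (P.erase p) f) :
    ∃ S ⊆ P, p ∈ S ∧ ∃ Z, IsObstruction G B S Z := by
  induction G using WellFoundedLT.induction generalizing B P with
  | ind G ih =>
  obtain ⟨f, hf⟩ := herase
  obtain hempty | ⟨v, hv⟩ := (B p).eq_empty_or_nonempty
  · exact ⟨{p}, by simpa, by simp, ∅, by simp, by simp, by simp [hempty]⟩
  obtain ⟨j, hjerase, hvw⟩ := hf.exists_adj hno hv
  have hw := hf.mem j hjerase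
  obtain ⟨hjp, hj⟩ := mem_erase.1 hjerase
  generalize f j = w at hvw hw
  have hlt := deleteEdges_singleton_lt hvw
  set H := G.deleteEdges {s(v, w)}
  by_cases hg : ∃ g, IsIndependentTransversal H B P g
  · obtain ⟨g, hg⟩ := hg
    obtain ⟨hgp, hgj⟩ := hg.apply_eq_of_deleteEdges hno hB hp hj hv hw
    have hno_merged : ¬ ∃ h, IsIndependentTransversal H (awayFrom G (mergeParts B p j) {v, w})
        (P.erase j) h := fun ⟨h, hh⟩ => by
      have hh' := hh.of_deleteEdges fun i hi _ _ hiv _ =>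
        (hh.mem i hi).2 ⟨w, by simp, hiv ▸ hvw⟩
      exact hno (hh'.exists_of_mergeParts hp hjp.symm hv hw)
    obtain ⟨S, hSP, hpS, Z, hZ⟩ := ih H hlt
      (pairwiseDisjoint_awayFrom (pairwiseDisjoint_mergeParts hB hp hj) {v, w})
      (mem_erase.2 ⟨hjp.symm, hp⟩) hno_merged ⟨g, hg.mergeParts_erase hB hp hj hgp hgj⟩
    have hjS : j ∉ S := fun h => notMem_erase j P (hSP h)
    exact ⟨insert j S, insert_subset hj (hSP.trans (erase_subset _ _)), mem_insert_of_mem hpS,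
      insert s(v, w) Z, (hZ.mono hlt.le).insert_of_mergeParts hpS hjS hvw⟩
  · obtain ⟨S, hSP, hpS, Z, hZ⟩ := ih H hlt hB hp hg ⟨f, hf.anti hlt.le⟩
    exact ⟨S, hSP, hpS, Z, hZ.mono hlt.le⟩

theorem exists_isObstruction [Nonempty V] (hB : (P : Set ι).PairwiseDisjoint B)
    (hno : ¬ ∃ f, IsIndependentTransversal G B P f) :
    ∃ S ⊆ P, ∃ Z, IsObstruction G B S Z := by
  classical
  induction P using Finset.strongInduction with
  | H P ih =>
  obtain rfl | ⟨p, hp⟩ := P.eq_empty_or_nonempty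
  · exact absurd ⟨fun _ => Classical.arbitrary V, by simp, by simp⟩ hno
  by_cases herase : ∃ f, IsIndependentTransversal G B (P.erase p) f
  · obtain ⟨S, hSP, -, hS⟩ := exists_isObstruction_of_erase hB hp hno herase
    exact ⟨S, hSP, hS⟩
  · obtain ⟨S, hSP, hS⟩ := ih _ (erase_ssubset hp)
      (hB.subset (coe_subset.2 (erase_subset p P))) herase
    exact ⟨S, hSP.trans (erase_subset _ _), hS⟩

end

theorem mul_lt_mul_of_mul_two_sub_div_lt {b c k r n Δ : ℝ} (hb : 0 < b) (hbr : b ≤ r)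
    (hk : 0 ≤ k) (hΔ : 0 ≤ Δ) (hc : c + k ≤ 2 * b) (hn : Δ * (2 - k / r) < n) :
    c * Δ < b * n := by
  have hkr : b * (k / r) ≤ k := by
    rw [mul_div_left_comm]
    exact mul_le_of_le_one_right hk (div_le_one_of_le₀ hbr (hb.le.trans hbr))
  calc c * Δ ≤ b * (2 - k / r) * Δ := by gcongr; linarith
    _ = b * (Δ * (2 - k / r)) := by ring
    _ < b * n := by gcongr

theorem exists_isIndependentTransversal_awayFrom {V ι : Type*} [Finite V] [Nonempty V] [Fintype ι]
    [DecidableEq ι] {G : SimpleGraph V} {B : ι → Set V} {k n Δ : ℕ}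
    (hB : Pairwise (Disjoint on B)) (hdeg : ∀ v, (G.neighborSet v).ncard ≤ Δ)
    (hsize : ∀ i, n ≤ (B i).ncard) (hn : (Δ : ℝ) * (2 - k / Fintype.card ι) < n)
    {J : Finset V} {U : Finset ι} (hJ : #J + k ≤ 2 * #Uᶜ + 2)
    (hdom : ∀ i ∉ U, B i ⊆ neighborsOf G J) :
    ∃ f, IsIndependentTransversal G (awayFrom G B J) U f := by
  classical
  by_contra hno
  obtain ⟨S, hSU, Z, hZ⟩ := exists_isObstruction
    (pairwiseDisjoint_awayFrom (hB.set_pairwise _) (J : Set V)) hno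
  have hdisj : Disjoint Uᶜ S := disjoint_compl_left.mono_right hSU
  have hcover : ⋃ i ∈ Uᶜ ∪ S, B i ⊆ neighborsOf G (J ∪ endpoints Z : Finset V) := by
    rw [set_biUnion_union, coe_union, neighborsOf_union]
    refine Set.union_subset ?_ ((biUnion_subset_neighborsOf_union_awayFrom B (J : Set V)).trans
      (Set.union_subset_union_right _ hZ.subset_neighborsOf))
    exact Set.iUnion₂_subset fun i hi =>
      (hdom i (mem_compl.1 hi)).trans Set.subset_union_left
  have hcount : #(Uᶜ ∪ S) * n ≤ #(J ∪ endpoints Z) * Δ := calc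
    _ ≤ (⋃ i ∈ Uᶜ ∪ S, B i).ncard :=
      card_mul_le_ncard_biUnion (hB.set_pairwise _) fun i _ => hsize i
    _ ≤ (neighborsOf G (J ∪ endpoints Z : Finset V)).ncard := Set.ncard_le_ncard hcover
    _ ≤ #(J ∪ endpoints Z) * Δ := ncard_neighborsOf_le _ fun v _ => hdeg v
  have hcard : #(J ∪ endpoints Z) + k ≤ 2 * #(Uᶜ ∪ S) := by
    have := card_union_le J (endpoints Z)
    have := card_endpoints_le Z
    have := hZ.card_lt
    rw [card_union_of_disjoint hdisj]
    omega
  have hpos : 0 < #(Uᶜ ∪ S) :=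
    (Nat.zero_lt_of_lt hZ.card_lt).trans_le (card_le_card subset_union_right)
  have hlt : (#(J ∪ endpoints Z) : ℝ) * Δ < #(Uᶜ ∪ S) * n :=
    mul_lt_mul_of_mul_two_sub_div_lt (by exact_mod_cast hpos) (by exact_mod_cast card_le_univ _)
      k.cast_nonneg Δ.cast_nonneg (by exact_mod_cast hcard) hn
  exact hcount.not_gt (by exact_mod_cast hlt)

theorem stmt18_general {V ι : Type*} [Finite V] [Fintype ι] (d t n Δ : ℕ)
    (G : SimpleGraph V) (part : V → ι)
    (hdeg : ∀ v, (G.neighborSet v).ncard ≤ Δ)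
    (hsize : ∀ i, n ≤ (part ⁻¹' {i}).ncard)
    (hn : (n : ℝ) > Δ * (2 - (2 * d + 3) / Fintype.card ι))
    (I : Finset V) (U : Finset ι) (hU : #U + t = Fintype.card ι)
    (hI : #I + 2 * (d + 1) ≤ 2 * t)
    (hdom : ∀ v, part v ∉ U → ∃ u ∈ I, G.Adj v u)
    (x : V) :
    ∃ T' : Finset V,
      (∀ y ∈ T', part y ∈ U) ∧
      (∀ i ∈ U, ∃! y, y ∈ T' ∧ part y = i) ∧
      (∀ y ∈ T', ∀ z ∈ T', ¬ G.Adj y z) ∧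
      (∀ y ∈ T', ∀ z, z ∈ I ∨ z = x → ¬ G.Adj z y) := by
  classical
  have : Nonempty V := ⟨x⟩
  have hJ : #(insert x I) + (2 * d + 3) ≤ 2 * #Uᶜ + 2 := by
    have := card_insert_le x I
    rw [card_compl]
    omega
  have hdom' : ∀ i ∉ U, part ⁻¹' {i} ⊆ neighborsOf G (insert x I : Finset V) := by
    rintro _ hi v rfl
    obtain ⟨u, hu, hadj⟩ := hdom v hi
    exact ⟨u, mem_insert_of_mem hu, hadj⟩
  obtain ⟨f, hf⟩ := exists_isIndependentTransversal_awayFrom (pairwise_disjoint_fiber part) hdeg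
    hsize (by exact_mod_cast hn) hJ hdom'
  obtain ⟨T, hmem, huniq, hindep⟩ := hf.exists_finset fun _ _ hu => hu.1
  refine ⟨T, fun y hy => (hmem y hy).1, huniq, hindep, fun y hy z hz hadj => ?_⟩
  exact (hmem y hy).2.2 ⟨z, by simpa [or_comm] using hz, hadj.symm⟩

/-- If n > Δ(2 − (2d+3)/r), d+1 ≤ t ≤ r, U is a set of r − t parts, |I| ≤ 2(t−d−1) and
I dominates every part not in U, then for every vertex x there is an independent
transversal T' of the parts of U avoiding all neighbours of I ∪ {x}. -/
theorem stmt18 {V : Type} [Fintype V] (r d t n Δ : ℕ) (hdt : d + 1 ≤ t) (ht : t ≤ r)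
    (G : SimpleGraph V) (part : V → Fin r)
    (hpartite : ∀ v w, G.Adj v w → part v ≠ part w)
    (hdeg : ∀ v, (G.neighborSet v).ncard ≤ Δ)
    (hsize : ∀ i : Fin r, n ≤ ({v | part v = i} : Set V).ncard)
    (hn : (n : ℝ) > Δ * (2 - (2 * d + 3) / r))
    (I : Finset V) (U : Finset (Fin r)) (hU : U.card = r - t)
    (hI : I.card ≤ 2 * (t - d - 1))
    (hdom : ∀ v : V, part v ∉ U → ∃ u ∈ I, G.Adj v u)
    (x : V) :
    ∃ T' : Finset V,
      (∀ y ∈ T', part y ∈ U) ∧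
      (∀ i ∈ U, ∃! y, y ∈ T' ∧ part y = i) ∧
      (∀ y ∈ T', ∀ z ∈ T', ¬ G.Adj y z) ∧
      (∀ y ∈ T', ∀ z, z ∈ I ∨ z = x → ¬ G.Adj z y) :=
  stmt18_general d t n Δ G part hdeg hsize (by simpa using hn) I U
    (by rw [hU, Fintype.card_fin]; omega) (by omega) hdom x
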